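/- If Z ⊆ X is T-invariant and compact, then the three dimensional entropies coincide: h^B(Z) = h^P(Z) = h^U(Z). -/

import Mathlib

open Filter Set
open scoped ENNReal NNReal

namespace BowenProduct

variable {X : Type*} [PseudoMetricSpace X]

/-- The open Bowen ball of order `n` and radius `ε` around `x`:
the ball for the `n`-th Bowen metric `d_n(x,y) = max_{0 ≤ k ≤ n-1} d(T^k x, T^k y)`. -/
def bowenBall (T : X → X) (n : ℕ) (x : X) (ε : ℝ) : Set X :=
  {y | ∀ k < n, dist (T^[k] x) (T^[k] y) < ε}

/-- The closed Bowen ball of order `n` and radius `ε` around `x`. -/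
def bowenClosedBall (T : X → X) (n : ℕ) (x : X) (ε : ℝ) : Set X :=
  {y | ∀ k < n, dist (T^[k] x) (T^[k] y) ≤ ε}

/-- `M^s_{N,ε}(Z)`: the infimum of `Σ_i exp(-s n_i)` over all finite or countable families
`{B_{n_i}(x_i, ε)}` with `x_i ∈ X`, `n_i ≥ N`, covering `Z`. -/
noncomputable def coverSum (T : X → X) (s : ℝ) (N : ℕ) (ε : ℝ) (Z : Set X) : ℝ≥0∞ :=
  ⨅ (F : Set (X × ℕ)) (_ : F.Countable) (_ : ∀ p ∈ F, N ≤ p.2)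
    (_ : Z ⊆ ⋃ p ∈ F, bowenBall T p.2 p.1 ε),
    ∑' p : F, ENNReal.ofReal (Real.exp (-s * ((p : X × ℕ).2 : ℝ)))

/-- `M^s_ε(Z) = lim_{N → ∞} M^s_{N,ε}(Z)`; the limit exists and equals the supremum
since `M^s_{N,ε}(Z)` does not decrease as `N` increases. -/
noncomputable def coverMeasureEps (T : X → X) (s ε : ℝ) (Z : Set X) : ℝ≥0∞ :=
  ⨆ N : ℕ, coverSum T s N ε Z

/-- `M^s(Z) = lim_{ε → 0} M^s_ε(Z)`; the limit exists and equals the supremum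
since `M^s_ε(Z)` does not decrease as `ε` decreases. -/
noncomputable def coverMeasure (T : X → X) (s : ℝ) (Z : Set X) : ℝ≥0∞ :=
  ⨆ (ε : ℝ) (_ : 0 < ε), coverMeasureEps T s ε Z

/-- Bowen's topological entropy `h^B(Z)`: the critical value of `s ≥ 0` at which
`M^s(Z)` jumps from `∞` to `0`, i.e. `inf {s ≥ 0 : M^s(Z) = 0}` (and `∞` if no such `s`). -/
noncomputable def bowenEntropy (T : X → X) (Z : Set X) : ℝ≥0∞ :=
  ⨅ (s : ℝ≥0) (_ : coverMeasure T (s : ℝ) Z = 0), (s : ℝ≥0∞)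

/-- `P^s_{N,ε}(Z)`: the supremum of `Σ_i exp(-s n_i)` over all finite or countable pairwise
disjoint families `{B̄_{n_i}(x_i, ε)}` with `x_i ∈ Z`, `n_i ≥ N`. -/
noncomputable def packingSum (T : X → X) (s : ℝ) (N : ℕ) (ε : ℝ) (Z : Set X) : ℝ≥0∞ :=
  ⨆ (F : Set (X × ℕ)) (_ : F.Countable) (_ : ∀ p ∈ F, p.1 ∈ Z ∧ N ≤ p.2)
    (_ : F.PairwiseDisjoint fun p => bowenClosedBall T p.2 p.1 ε),
    ∑' p : F, ENNReal.ofReal (Real.exp (-s * ((p : X × ℕ).2 : ℝ)))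

/-- `P^s_ε(Z) = lim_{N → ∞} P^s_{N,ε}(Z)`; the limit exists and equals the infimum
since `P^s_{N,ε}(Z)` does not increase as `N` increases. -/
noncomputable def packingPre (T : X → X) (s ε : ℝ) (Z : Set X) : ℝ≥0∞ :=
  ⨅ N : ℕ, packingSum T s N ε Z

/-- `𝒫^s_ε(Z) = inf { Σ_{i=1}^∞ P^s_ε(Z_i) : ∪_{i=1}^∞ Z_i ⊇ Z }`. -/
noncomputable def packingMeasureEps (T : X → X) (s ε : ℝ) (Z : Set X) : ℝ≥0∞ :=
  ⨅ (Zs : ℕ → Set X) (_ : Z ⊆ ⋃ i, Zs i), ∑' i, packingPre T s ε (Zs i)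

/-- `h^P(Z, ε)`: the critical value of `s ≥ 0` at which `𝒫^s_ε(Z)` jumps from `∞` to `0`. -/
noncomputable def packingEntropyEps (T : X → X) (ε : ℝ) (Z : Set X) : ℝ≥0∞ :=
  ⨅ (s : ℝ≥0) (_ : packingMeasureEps T (s : ℝ) ε Z = 0), (s : ℝ≥0∞)

/-- The packing topological entropy `h^P(Z) = lim_{ε → 0} h^P(Z, ε)`; the limit exists and
equals the supremum since `h^P(Z,ε)` increases as `ε` decreases. -/
noncomputable def packingEntropy (T : X → X) (Z : Set X) : ℝ≥0∞ :=
  ⨆ (ε : ℝ) (_ : 0 < ε), packingEntropyEps T ε Z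

/-- `r_n(Z, ε)`: the largest cardinality of an `(n,ε)`-separated subset `E ⊆ Z`, i.e. a set in
which distinct points are at Bowen `d_n`-distance `> ε`. -/
noncomputable def maxSep (T : X → X) (Z : Set X) (n : ℕ) (ε : ℝ) : ℕ :=
  sSup {k : ℕ | ∃ E : Finset X, ↑E ⊆ Z ∧
    (∀ x ∈ E, ∀ y ∈ E, x ≠ y → ∃ i < n, ε < dist (T^[i] x) (T^[i] y)) ∧ E.card = k}

/-- The upper capacity topological entropy
`h^U(Z) = lim_{ε → 0} limsup_{n → ∞} (1/n) log r_n(Z, ε)`; the limit over `ε` equals the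
supremum by monotonicity. -/
noncomputable def upperCapacityEntropy (T : X → X) (Z : Set X) : ℝ≥0∞ :=
  ⨆ (ε : ℝ) (_ : 0 < ε),
    Filter.atTop.limsup fun n : ℕ => ENNReal.ofReal (Real.log (maxSep T Z n ε) / n)

end BowenProduct

namespace BowenProduct

section Monotonicity

variable {X : Type*} [PseudoMetricSpace X] {T : X → X}

theorem coverSum_mono_order {s ε : ℝ} {Z : Set X} {N M : ℕ} (h : N ≤ M) :
    coverSum T s N ε Z ≤ coverSum T s M ε Z := by
  refine le_iInf fun F => le_iInf fun hF => le_iInf fun hn => le_iInf fun hc => ?_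
  exact iInf_le_of_le F <| iInf_le_of_le hF <|
    iInf_le_of_le (fun p hp => h.trans (hn p hp)) <| iInf_le_of_le hc le_rfl

theorem coverSum_anti_exponent {s t ε : ℝ} {Z : Set X} {N : ℕ} (h : s ≤ t) :
    coverSum T t N ε Z ≤ coverSum T s N ε Z := by
  refine iInf_mono fun F => iInf_mono fun hF => iInf_mono fun hn => iInf_mono fun hc => ?_
  refine ENNReal.tsum_le_tsum fun p => ENNReal.ofReal_le_ofReal (Real.exp_le_exp.2 ?_)
  have : (0 : ℝ) ≤ ((p : X × ℕ).2 : ℝ) := Nat.cast_nonneg _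
  nlinarith

theorem packingSum_anti_order {s ε : ℝ} {Z : Set X} {N M : ℕ} (h : N ≤ M) :
    packingSum T s M ε Z ≤ packingSum T s N ε Z := by
  refine iSup_le fun F => iSup_le fun hF => iSup_le fun hn => iSup_le fun hc => ?_
  exact le_iSup_of_le F <| le_iSup_of_le hF <|
    le_iSup_of_le (fun p hp => ⟨(hn p hp).1, h.trans (hn p hp).2⟩) <| le_iSup_of_le hc le_rfl

theorem coverSum_le_tsum {s ε : ℝ} {Z : Set X} {N : ℕ} {Zs : ℕ → Set X} (h : Z ⊆ ⋃ i, Zs i) :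
    coverSum T s N ε Z ≤ ∑' i, coverSum T s N ε (Zs i) := by
  refine ENNReal.le_of_forall_pos_le_add fun δ hδ hfin => ?_
  obtain ⟨δ', hδ'pos, hδ'⟩ :=
    ENNReal.exists_pos_sum_of_countable (ENNReal.coe_pos.2 hδ).ne' ℕ
  have hex : ∀ i, ∃ F : Set (X × ℕ), F.Countable ∧ (∀ p ∈ F, N ≤ p.2) ∧
      (Zs i ⊆ ⋃ p ∈ F, bowenBall T p.2 p.1 ε) ∧
      ∑' p : F, ENNReal.ofReal (Real.exp (-s * ((p : X × ℕ).2 : ℝ))) <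
        coverSum T s N ε (Zs i) + δ' i := by
    intro i
    have hlt : coverSum T s N ε (Zs i) < coverSum T s N ε (Zs i) + δ' i :=
      ENNReal.lt_add_right (ENNReal.ne_top_of_tsum_ne_top hfin.ne i)
        (ENNReal.coe_pos.2 (hδ'pos i)).ne'
    conv_lhs at hlt => unfold coverSum
    simpa only [iInf_lt_iff, exists_prop] using hlt
  choose F hF hn hc hsum using hex
  calc coverSum T s N ε Z
      ≤ ∑' p : (⋃ i, F i : Set (X × ℕ)),
          ENNReal.ofReal (Real.exp (-s * ((p : X × ℕ).2 : ℝ))) := by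
        refine iInf_le_of_le (⋃ i, F i) <| iInf_le_of_le (countable_iUnion hF) <|
          iInf_le_of_le (fun p hp => ?_) <| iInf_le_of_le (fun z hz => ?_) le_rfl
        · obtain ⟨i, hi⟩ := mem_iUnion.1 hp
          exact hn i p hi
        · obtain ⟨i, hi⟩ := mem_iUnion.1 (h hz)
          obtain ⟨p, hp, hzp⟩ := mem_iUnion₂.1 (hc i hi)
          exact mem_iUnion₂.2 ⟨p, mem_iUnion.2 ⟨i, hp⟩, hzp⟩
    _ ≤ ∑' i, ∑' p : F i, ENNReal.ofReal (Real.exp (-s * ((p : X × ℕ).2 : ℝ))) :=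
        ENNReal.tsum_iUnion_le_tsum
          (fun p : X × ℕ => ENNReal.ofReal (Real.exp (-s * (p.2 : ℝ)))) F
    _ ≤ ∑' i, (coverSum T s N ε (Zs i) + δ' i) := ENNReal.tsum_le_tsum fun i => (hsum i).le
    _ = ∑' i, coverSum T s N ε (Zs i) + ∑' i, (δ' i : ℝ≥0∞) := ENNReal.tsum_add
    _ ≤ _ := add_le_add le_rfl hδ'.le

end Monotonicity

section Separated

variable {X : Type*} [PseudoMetricSpace X]

/-- A set is `(n, ε)`-separated if distinct points are at `d_n`-distance greater than `ε`. -/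
def IsBowenSeparated (T : X → X) (n : ℕ) (ε : ℝ) (E : Set X) : Prop :=
  ∀ x ∈ E, ∀ y ∈ E, x ≠ y → ∃ i < n, ε < dist (T^[i] x) (T^[i] y)

variable {T : X → X}

theorem mem_bowenBall_self {n : ℕ} {x : X} {ε : ℝ} (hε : 0 < ε) : x ∈ bowenBall T n x ε :=
  fun k _ => by simpa using hε

theorem mem_bowenClosedBall_self {n : ℕ} {x : X} {ε : ℝ} (hε : 0 ≤ ε) :
    x ∈ bowenClosedBall T n x ε :=
  fun k _ => by simpa using hε

theorem isOpen_bowenBall (hT : Continuous T) (n : ℕ) (x : X) (ε : ℝ) :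
    IsOpen (bowenBall T n x ε) := by
  have : bowenBall T n x ε =
      ⋂ k ∈ Finset.range n, {y | dist (T^[k] x) (T^[k] y) < ε} := by
    ext y
    simp [bowenBall]
  rw [this]
  exact isOpen_biInter_finset fun k _ =>
    isOpen_lt (continuous_const.dist (hT.iterate k)) continuous_const

/-- Centers of disjoint closed Bowen balls of the same order are separated. -/
theorem isBowenSeparated_of_pairwiseDisjoint {n : ℕ} {ε : ℝ} (hε : 0 ≤ ε) {E : Set X}
    (h : E.PairwiseDisjoint fun x => bowenClosedBall T n x ε) : IsBowenSeparated T n ε E := by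
  intro x hx y hy hxy
  by_contra! hcon
  exact Set.disjoint_left.1 (h hx hy hxy) (show y ∈ bowenClosedBall T n x ε from hcon)
    (mem_bowenClosedBall_self hε)

theorem bddAbove_card_separated [CompactSpace X] (hT : Continuous T) (Z : Set X) (n : ℕ)
    {ε : ℝ} (hε : 0 < ε) :
    BddAbove {k : ℕ | ∃ E : Finset X, ↑E ⊆ Z ∧
      (∀ x ∈ E, ∀ y ∈ E, x ≠ y → ∃ i < n, ε < dist (T^[i] x) (T^[i] y)) ∧ E.card = k} := by
  obtain ⟨t, -, ht⟩ := isCompact_univ.elim_nhds_subcover (fun x => bowenBall T n x (ε / 2))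
    fun x _ => (isOpen_bowenBall hT n x _).mem_nhds (mem_bowenBall_self (half_pos hε))
  have hex : ∀ y : X, ∃ x ∈ t, y ∈ bowenBall T n x (ε / 2) := fun y => by
    simpa using ht (mem_univ y)
  choose c hct hc using hex
  refine ⟨t.card, ?_⟩
  rintro _ ⟨E, -, hsep, rfl⟩
  refine Finset.card_le_card_of_injOn c (fun x _ => hct x) fun x hx y hy hxy => ?_
  by_contra hne
  obtain ⟨i, hi, hlt⟩ := hsep x hx y hy hne
  have h1 := hc x i hi
  have h2 := hc y i hi
  rw [hxy, dist_comm] at h1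
  linarith [dist_triangle (T^[i] x) (T^[i] (c y)) (T^[i] y)]

theorem card_le_maxSep [CompactSpace X] (hT : Continuous T) {Z : Set X} {n : ℕ}
    {ε : ℝ} (hε : 0 < ε) {E : Finset X} (hE : ↑E ⊆ Z) (hsep : IsBowenSeparated T n ε (E : Set X)) :
    E.card ≤ maxSep T Z n ε :=
  le_csSup (bddAbove_card_separated hT Z n hε) ⟨E, hE, hsep, rfl⟩

theorem exists_card_eq_maxSep [CompactSpace X] (hT : Continuous T) (Z : Set X) (n : ℕ)
    {ε : ℝ} (hε : 0 < ε) :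
    ∃ E : Finset X, ↑E ⊆ Z ∧ IsBowenSeparated T n ε (E : Set X) ∧ E.card = maxSep T Z n ε :=
  Nat.sSup_mem (s := {k : ℕ | ∃ E : Finset X, (E : Set X) ⊆ Z ∧
      (∀ x ∈ E, ∀ y ∈ E, x ≠ y → ∃ i < n, ε < dist (T^[i] x) (T^[i] y)) ∧ E.card = k})
    ⟨0, ∅, by simp⟩ (bddAbove_card_separated hT Z n hε)

theorem encard_le_maxSep [CompactSpace X] (hT : Continuous T) {Z : Set X} {n : ℕ}
    {ε : ℝ} (hε : 0 < ε) {E : Set X} (hE : E ⊆ Z) (hsep : IsBowenSeparated T n ε E) :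
    E.encard ≤ maxSep T Z n ε := by
  by_contra! hlt
  obtain ⟨t, htE, ht⟩ := Set.exists_subset_encard_eq (Order.add_one_le_of_lt hlt)
  have hfin : t.Finite := Set.finite_of_encard_eq_coe (k := maxSep T Z n ε + 1) (by simpa using ht)
  lift t to Finset X using hfin
  have hle := card_le_maxSep hT hε (htE.trans hE)
    (fun x hx y hy => hsep x (htE hx) y (htE hy))
  rw [Set.encard_coe_eq_coe_finsetCard] at ht
  have : t.card = maxSep T Z n ε + 1 := by exact_mod_cast ht
  omega

theorem maxSep_zero_le_one [CompactSpace X] (hT : Continuous T) (Z : Set X)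
    {ε : ℝ} (hε : 0 < ε) : maxSep T Z 0 ε ≤ 1 := by
  obtain ⟨E, -, hsep, hcard⟩ := exists_card_eq_maxSep hT Z 0 hε
  rw [← hcard, Finset.card_le_one]
  intro x hx y hy
  by_contra hne
  obtain ⟨i, hi, -⟩ := hsep x hx y hy hne
  omega

theorem maxSep_le_sum [CompactSpace X] (hT : Continuous T) {Z : Set X}
    (hinv : MapsTo T Z Z) {ε : ℝ} (hε : 0 < ε) {F : Finset (X × ℕ)}
    (hF : Z ⊆ ⋃ p ∈ F, bowenBall T p.2 p.1 (ε / 2)) (n : ℕ) :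
    maxSep T Z n ε ≤ ∑ p ∈ F, maxSep T Z (n - p.2) ε := by
  classical
  obtain ⟨E, hEZ, hsep, hcard⟩ := exists_card_eq_maxSep hT Z n hε
  have hcover : E ⊆ F.biUnion fun p => E.filter (· ∈ bowenBall T p.2 p.1 (ε / 2)) := by
    intro x hx
    obtain ⟨p, hp, hxp⟩ := mem_iUnion₂.1 (hF (hEZ hx))
    exact Finset.mem_biUnion.2 ⟨p, hp, Finset.mem_filter.2 ⟨hx, hxp⟩⟩
  rw [← hcard]
  refine (Finset.card_le_card hcover).trans (Finset.card_biUnion_le.trans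
    (Finset.sum_le_sum fun p _ => ?_))
  set A := E.filter (· ∈ bowenBall T p.2 p.1 (ε / 2))
  have hA : ∀ x ∈ A, ∀ y ∈ A, x ≠ y →
      ∃ j < n - p.2, ε < dist (T^[j] (T^[p.2] x)) (T^[j] (T^[p.2] y)) := by
    intro x hx y hy hne
    obtain ⟨hxE, hxp⟩ := Finset.mem_filter.1 hx
    obtain ⟨hyE, hyp⟩ := Finset.mem_filter.1 hy
    obtain ⟨i, hi, hlt⟩ := hsep x hxE y hyE hne
    have hpi : p.2 ≤ i := by
      by_contra! hip
      have h1 := hxp i hip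
      have h2 := hyp i hip
      rw [dist_comm] at h1
      linarith [dist_triangle (T^[i] x) (T^[i] p.1) (T^[i] y)]
    refine ⟨i - p.2, by omega, ?_⟩
    rwa [← Function.iterate_add_apply, ← Function.iterate_add_apply, Nat.sub_add_cancel hpi]
  have hinj : Set.InjOn (T^[p.2]) (A : Set X) := by
    intro x hx y hy hxy
    by_contra hne
    obtain ⟨j, -, hlt⟩ := hA x hx y hy hne
    rw [hxy, dist_self] at hlt
    exact hε.not_gt hlt
  rw [← Finset.card_image_of_injOn hinj]
  refine card_le_maxSep hT hε ?_ ?_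
  · intro y hy
    obtain ⟨x, hx, rfl⟩ := Finset.mem_image.1 (Finset.mem_coe.1 hy)
    exact hinv.iterate p.2 (hEZ (Finset.mem_filter.1 hx).1)
  · intro x' hx' y' hy' hne
    obtain ⟨x, hx, rfl⟩ := Finset.mem_image.1 (Finset.mem_coe.1 hx')
    obtain ⟨y, hy, rfl⟩ := Finset.mem_image.1 (Finset.mem_coe.1 hy')
    exact hA x hx y hy fun h => hne (h ▸ rfl)

end Separated

section Comparison

variable {X : Type*} [PseudoMetricSpace X] [CompactSpace X] {T : X → X}

theorem coverSum_le_packingSum (hT : Continuous T) (s : ℝ) (n : ℕ) {ε : ℝ} (hε : 0 < ε)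
    (Z : Set X) : coverSum T s n (3 * ε) Z ≤ packingSum T s n ε Z := by
  classical
  let S : Set ℕ := {k | ∃ E : Finset X, ↑E ⊆ Z ∧
    (E : Set X).PairwiseDisjoint (fun x => bowenClosedBall T n x ε) ∧ E.card = k}
  have hbdd : BddAbove S := by
    refine ⟨maxSep T Z n ε, ?_⟩
    rintro _ ⟨E, hE, hd, rfl⟩
    exact card_le_maxSep hT hε hE (isBowenSeparated_of_pairwiseDisjoint hε.le hd)
  obtain ⟨E, hEZ, hdisj, hcard⟩ := Nat.sSup_mem (s := S) ⟨0, ∅, by simp⟩ hbdd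
  have hmax : ∀ z ∈ Z, ∃ x ∈ E, ∃ w, w ∈ bowenClosedBall T n x ε ∧
      w ∈ bowenClosedBall T n z ε := by
    intro z hz
    by_contra! hcon
    have hzE : z ∉ E := fun hzE =>
      hcon z hzE z (mem_bowenClosedBall_self hε.le) (mem_bowenClosedBall_self hε.le)
    have hmem : (insert z E).card ∈ S := by
      refine ⟨insert z E, ?_, ?_, rfl⟩
      · rw [Finset.coe_insert]
        exact Set.insert_subset hz hEZ
      · rw [Finset.coe_insert, Set.pairwiseDisjoint_insert_of_notMem (by simpa using hzE)]
        exact ⟨hdisj, fun x hx => Set.disjoint_right.2 (hcon x hx)⟩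
    have := le_csSup hbdd hmem
    rw [Finset.card_insert_of_notMem hzE] at this
    omega
  let F : Set (X × ℕ) := (fun x => (x, n)) '' (E : Set X)
  have hFc : F.Countable := E.countable_toSet.image _
  calc coverSum T s n (3 * ε) Z
      ≤ ∑' p : F, ENNReal.ofReal (Real.exp (-s * ((p : X × ℕ).2 : ℝ))) := by
        refine iInf_le_of_le F <| iInf_le_of_le hFc <| iInf_le_of_le ?_ <|
          iInf_le_of_le (fun z hz => ?_) le_rfl
        · rintro _ ⟨x, -, rfl⟩
          exact le_rfl
        · obtain ⟨x, hx, w, hw, hw'⟩ := hmax z hz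
          refine mem_iUnion₂.2 ⟨(x, n), ⟨x, hx, rfl⟩, fun k hk => ?_⟩
          have h1 := hw k hk
          have h2 := hw' k hk
          rw [dist_comm] at h2
          have := dist_triangle (T^[k] x) (T^[k] w) (T^[k] z)
          simp only
          linarith
    _ ≤ packingSum T s n ε Z := by
        refine le_iSup_of_le F <| le_iSup_of_le hFc <| le_iSup_of_le ?_ <|
          le_iSup_of_le ?_ le_rfl
        · rintro _ ⟨x, hx, rfl⟩
          exact ⟨hEZ hx, le_rfl⟩
        · rintro _ ⟨x, hx, rfl⟩ _ ⟨y, hy, rfl⟩ hne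
          exact hdisj hx hy fun h => hne (h ▸ rfl)

theorem coverMeasureEps_le_packingMeasureEps (hT : Continuous T) (s : ℝ) {ε : ℝ} (hε : 0 < ε)
    (Z : Set X) : coverMeasureEps T s (3 * ε) Z ≤ packingMeasureEps T s ε Z := by
  refine iSup_le fun N => le_iInf fun Zs => le_iInf fun hZs =>
    (coverSum_le_tsum hZs).trans (ENNReal.tsum_le_tsum fun i => le_iInf fun M => ?_)
  exact (coverSum_mono_order (le_max_left N M)).trans
    ((coverSum_le_packingSum hT s _ hε _).trans (packingSum_anti_order (le_max_right N M)))

theorem bowenEntropy_le_packingEntropy (hT : Continuous T) (Z : Set X) :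
    bowenEntropy T Z ≤ packingEntropy T Z := by
  refine le_of_forall_gt_imp_ge_of_dense fun a ha => ?_
  obtain ⟨s, hs, hsa⟩ := ENNReal.lt_iff_exists_nnreal_btwn.1 ha
  refine (iInf₂_le s ?_).trans hsa.le
  rw [coverMeasure, ← nonpos_iff_eq_zero]
  refine iSup₂_le fun ε hε => ?_
  have hlt : packingEntropyEps T (ε / 3) Z < s :=
    (le_iSup₂ (f := fun (ε : ℝ) (_ : 0 < ε) => packingEntropyEps T ε Z) (ε / 3)
      (by positivity)).trans_lt hs
  simp only [packingEntropyEps, iInf_lt_iff, exists_prop] at hlt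
  obtain ⟨t, ht, hts⟩ := hlt
  have h0 := coverMeasureEps_le_packingMeasureEps hT t (show 0 < ε / 3 by positivity) Z
  rw [ht, mul_div_cancel₀ ε (three_ne_zero)] at h0
  refine le_trans (iSup_mono fun N => coverSum_anti_exponent ?_) h0
  exact_mod_cast hts.le

theorem packingSum_le_tsum_maxSep (hT : Continuous T) (s : ℝ) (N : ℕ) {ε : ℝ} (hε : 0 < ε)
    (Z : Set X) :
    packingSum T s N ε Z ≤ ∑' k : ℕ, (maxSep T Z (k + N) ε : ℝ≥0∞) *
      ENNReal.ofReal (Real.exp (-s * ((k + N : ℕ) : ℝ))) := by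
  refine iSup_le fun F => iSup_le fun hF => iSup_le fun hn => iSup_le fun hd => ?_
  let G : ℕ → Set (X × ℕ) := fun k => {p ∈ F | p.2 = k + N}
  have hFG : F ⊆ ⋃ k, G k := fun p hp =>
    mem_iUnion.2 ⟨p.2 - N, hp, (Nat.sub_add_cancel (hn p hp).2).symm⟩
  let f : X × ℕ → ℝ≥0∞ := fun p => ENNReal.ofReal (Real.exp (-s * (p.2 : ℝ)))
  refine (ENNReal.tsum_mono_subtype f hFG).trans ((ENNReal.tsum_iUnion_le_tsum f G).trans
    (ENNReal.tsum_le_tsum fun k => ?_))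
  have hconst : ∑' p : G k, f p =
      ∑' _ : G k, ENNReal.ofReal (Real.exp (-s * ((k + N : ℕ) : ℝ))) :=
    tsum_congr fun p => by simp only [f, p.2.2]
  rw [hconst, ENNReal.tsum_set_const]
  gcongr
  have hinj : Set.InjOn Prod.fst (G k) := fun p hp q hq h =>
    Prod.ext h (hp.2.trans hq.2.symm)
  rw [← hinj.encard_image]
  have hle : (Prod.fst '' G k).encard ≤ maxSep T Z (k + N) ε := by
    refine encard_le_maxSep hT hε ?_ (isBowenSeparated_of_pairwiseDisjoint hε.le ?_)
    · rintro _ ⟨p, hp, rfl⟩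
      exact (hn p hp.1).1
    · rintro _ ⟨p, hp, rfl⟩ _ ⟨q, hq, rfl⟩ hne
      have := hd hp.1 hq.1 fun h => hne (h ▸ rfl)
      simpa only [Function.onFun, hp.2, hq.2] using this
  exact_mod_cast ENat.toENNReal_le.2 hle

theorem packingEntropy_le_upperCapacityEntropy (hT : Continuous T) (Z : Set X) :
    packingEntropy T Z ≤ upperCapacityEntropy T Z := by
  refine iSup₂_le fun ε hε => le_of_forall_gt_imp_ge_of_dense fun a ha => ?_
  obtain ⟨s, hs, hsa⟩ := ENNReal.lt_iff_exists_nnreal_btwn.1 ha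
  obtain ⟨t, ht, hts⟩ := ENNReal.lt_iff_exists_nnreal_btwn.1 hs
  refine (iInf₂_le s ?_).trans hsa.le
  have hlim : atTop.limsup (fun n : ℕ => ENNReal.ofReal (Real.log (maxSep T Z n ε) / n)) < t :=
    (le_iSup₂ (f := fun (ε : ℝ) (_ : 0 < ε) => atTop.limsup fun n : ℕ =>
      ENNReal.ofReal (Real.log (maxSep T Z n ε) / n)) ε hε).trans_lt ht
  obtain ⟨N₀, hN₀⟩ := eventually_atTop.1
    ((eventually_lt_of_limsup_lt hlim).and (eventually_gt_atTop 0))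
  have hgrowth : ∀ n ≥ N₀, (maxSep T Z n ε : ℝ) ≤ Real.exp (t * n) := by
    intro n hn
    obtain ⟨h1, h2⟩ := hN₀ n hn
    have hn' : (0 : ℝ) < n := by exact_mod_cast h2
    rcases (Nat.cast_nonneg (α := ℝ) (maxSep T Z n ε)).eq_or_lt with h0 | h0
    · rw [← h0]
      exact (Real.exp_pos _).le
    · rw [← Real.log_le_iff_le_exp h0, ← div_le_iff₀ hn']
      rw [← ENNReal.ofReal_coe_nnreal] at h1
      exact (ENNReal.ofReal_le_ofReal_iff t.2).1 h1.le
  set r : ℝ≥0∞ := ENNReal.ofReal (Real.exp (-((s : ℝ) - t)))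
  have hr : r < 1 := by
    have : (t : ℝ) < s := by exact_mod_cast hts
    refine ENNReal.ofReal_lt_one.2 (Real.exp_lt_one_iff.2 ?_)
    linarith
  have hbound : ∀ N ≥ N₀, packingSum T s N ε Z ≤ ∑' k : ℕ, r ^ (k + N) := by
    intro N hN
    refine (packingSum_le_tsum_maxSep hT s N hε Z).trans (ENNReal.tsum_le_tsum fun k => ?_)
    rw [← ENNReal.ofReal_natCast, ← ENNReal.ofReal_mul (Nat.cast_nonneg _),
      ← ENNReal.ofReal_pow (Real.exp_pos _).le, ← Real.exp_nat_mul]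
    refine ENNReal.ofReal_le_ofReal ?_
    calc _ ≤ Real.exp (t * ((k + N : ℕ) : ℝ)) * Real.exp (-s * ((k + N : ℕ) : ℝ)) := by
          gcongr
          exact hgrowth _ (by omega)
      _ = _ := by
          rw [← Real.exp_add]
          ring_nf
  have hzero : packingPre T s ε Z = 0 := by
    have htend := ENNReal.tendsto_sum_nat_add (fun k => r ^ k) (by
      rw [ENNReal.tsum_geometric]
      exact ENNReal.inv_ne_top.2 (tsub_pos_of_lt hr).ne')
    refine nonpos_iff_eq_zero.1 (ge_of_tendsto htend ?_)
    filter_upwards [eventually_ge_atTop N₀] with N hN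
    exact (iInf_le _ N).trans (hbound N hN)
  have hempty : packingPre T s ε (∅ : Set X) = 0 := by
    refine nonpos_iff_eq_zero.1 ((iInf_le _ 0).trans ?_)
    refine iSup_le fun F => iSup_le fun hF => iSup_le fun hn => iSup_le fun hd => ?_
    have : F = ∅ := Set.eq_empty_of_forall_notMem fun p hp => (hn p hp).1
    subst this
    simp
  refine nonpos_iff_eq_zero.1 ((iInf₂_le (fun i => if i = 0 then Z else ∅) ?_).trans ?_)
  · exact fun z hz => mem_iUnion.2 ⟨0, by simpa using hz⟩
  · refine (ENNReal.tsum_eq_zero.2 fun i => ?_).le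
    rcases eq_or_ne i 0 with hi | hi <;> simp [hi, hzero, hempty]

/-- A finite cover by Bowen balls of small total weight bounds the growth of separated sets. -/
theorem maxSep_le_exp (hT : Continuous T) {Z : Set X} (hinv : MapsTo T Z Z) {ε : ℝ} (hε : 0 < ε)
    {F : Finset (X × ℕ)} (hF : Z ⊆ ⋃ p ∈ F, bowenBall T p.2 p.1 (ε / 2)) {s : ℝ} (hs : 0 ≤ s)
    {m : ℕ} (hpos : ∀ p ∈ F, 1 ≤ p.2) (hm : ∀ p ∈ F, p.2 ≤ m)
    (hsum : ∑ p ∈ F, Real.exp (-s * (p.2 : ℝ)) ≤ 1) (n : ℕ) :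
    (maxSep T Z n ε : ℝ) ≤ Real.exp (s * (n + m)) := by
  have hzero : (maxSep T Z 0 ε : ℝ) ≤ 1 := by exact_mod_cast maxSep_zero_le_one hT Z hε
  induction n using Nat.strong_induction_on with
  | _ n ih =>
    rcases Nat.eq_zero_or_pos n with rfl | hn
    · exact hzero.trans (Real.one_le_exp (by positivity))
    calc (maxSep T Z n ε : ℝ) ≤ ∑ p ∈ F, (maxSep T Z (n - p.2) ε : ℝ) := by
          exact_mod_cast maxSep_le_sum hT hinv hε hF n
      _ ≤ ∑ p ∈ F, Real.exp (s * (n + m)) * Real.exp (-s * (p.2 : ℝ)) := by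
          refine Finset.sum_le_sum fun p hp => ?_
          rw [← Real.exp_add]
          have h1 := hpos p hp
          rcases le_total p.2 n with h | h
          · refine (ih (n - p.2) (by omega)).trans (Real.exp_le_exp.2 (le_of_eq ?_))
            rw [Nat.cast_sub h]
            ring
          · rw [Nat.sub_eq_zero_of_le h]
            refine hzero.trans (Real.one_le_exp ?_)
            have : (p.2 : ℝ) ≤ m := by exact_mod_cast hm p hp
            have : 0 ≤ s * (n + (m - p.2)) := by
              have : (0 : ℝ) ≤ m - p.2 := by linarith
              positivity
            linarith
      _ = Real.exp (s * (n + m)) * ∑ p ∈ F, Real.exp (-s * (p.2 : ℝ)) := by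
          rw [Finset.mul_sum]
      _ ≤ Real.exp (s * (n + m)) := mul_le_of_le_one_right (Real.exp_pos _).le hsum

theorem upperCapacityEntropy_le_bowenEntropy (hT : Continuous T) {Z : Set X}
    (hinv : MapsTo T Z Z) (hcomp : IsCompact Z) :
    upperCapacityEntropy T Z ≤ bowenEntropy T Z := by
  refine le_iInf₂ fun s hs => iSup₂_le fun ε hε => ?_
  have hlt : coverSum T s 1 (ε / 2) Z < 1 := by
    have hle : coverSum T s 1 (ε / 2) Z ≤ coverMeasure T s Z :=
      le_iSup₂_of_le (ε / 2) (half_pos hε) (le_iSup (fun N => coverSum T s N (ε / 2) Z) 1)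
    exact (hle.trans_eq hs).trans_lt one_pos
  simp only [coverSum, iInf_lt_iff, exists_prop] at hlt
  obtain ⟨F, -, hn, hcover, hsum⟩ := hlt
  obtain ⟨F', hF'F, hF'fin, hF'⟩ := hcomp.elim_finite_subcover_image
    (fun p _ => isOpen_bowenBall hT p.2 p.1 (ε / 2)) hcover
  lift F' to Finset (X × ℕ) using hF'fin
  let f : X × ℕ → ℝ≥0∞ := fun p => ENNReal.ofReal (Real.exp (-s * (p.2 : ℝ)))
  have hsum' : ∑ p ∈ F', Real.exp (-s * (p.2 : ℝ)) ≤ 1 := by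
    rw [← ENNReal.ofReal_le_one, ENNReal.ofReal_sum_of_nonneg fun p _ => (Real.exp_pos _).le]
    calc _ = ∑' p : (F' : Set (X × ℕ)), f p := (Finset.tsum_subtype F' f).symm
      _ ≤ ∑' p : F, f p := ENNReal.tsum_mono_subtype f hF'F
      _ ≤ 1 := hsum.le
  set m := F'.sup Prod.snd
  have hgrowth := maxSep_le_exp hT hinv hε (by simpa using hF') s.2
    (fun p hp => hn p (hF'F hp)) (fun p hp => Finset.le_sup (f := Prod.snd) hp) hsum'
  have htend : Tendsto (fun n : ℕ => ENNReal.ofReal ((s : ℝ) + s * m / n)) atTop (nhds s) := by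
    rw [← ENNReal.ofReal_coe_nnreal]
    refine ENNReal.tendsto_ofReal ?_
    simpa using (tendsto_const_div_atTop_nhds_zero_nat ((s : ℝ) * m)).const_add (s : ℝ)
  refine le_trans (limsup_le_limsup ?_) htend.limsup_eq.le
  filter_upwards [eventually_gt_atTop 0] with n hn0
  refine ENNReal.ofReal_le_ofReal ?_
  have hn' : (0 : ℝ) < n := by exact_mod_cast hn0
  rw [div_le_iff₀ hn', add_mul, div_mul_cancel₀ _ hn'.ne', ← mul_add]
  rcases (Nat.cast_nonneg (α := ℝ) (maxSep T Z n ε)).eq_or_lt with h0 | h0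
  · rw [← h0, Real.log_zero]
    exact mul_nonneg s.2 (by positivity)
  · exact (Real.log_le_iff_le_exp h0).2 (hgrowth n)

end Comparison

end BowenProduct

/-- If `Z` is `T`-invariant and compact, then `h^B(Z) = h^P(Z) = h^U(Z)`. -/
theorem BowenProduct.entropies_eq_of_invariant_compact {X : Type*} [MetricSpace X]
    [CompactSpace X] (T : X → X) (hT : Continuous T) (Z : Set X)
    (hinv : Set.MapsTo T Z Z) (hcomp : IsCompact Z) :
    BowenProduct.bowenEntropy T Z = BowenProduct.packingEntropy T Z ∧
    BowenProduct.packingEntropy T Z = BowenProduct.upperCapacityEntropy T Z := by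
  have hBP := BowenProduct.bowenEntropy_le_packingEntropy hT Z
  have hPU := BowenProduct.packingEntropy_le_upperCapacityEntropy hT Z
  have hUB := BowenProduct.upperCapacityEntropy_le_bowenEntropy hT hinv hcomp
  exact ⟨le_antisymm hBP (hPU.trans hUB), le_antisymm hPU (hUB.trans hBP)⟩
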